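/- arXiv:2505.08023 — 2 statements merged into one kernel-verified Lean document; each statement's English description precedes it below -/
import Mathlib

section
/- Let λ > 0 and let r, ℓ : [0,T) × ℝ → ℝ be a C¹ solution of the diagonal system with initial data r(0,·) = r₀ = −ℓ(0,·), where r₀ is bounded and C¹, r₀(+∞) := lim_{x→+∞} r₀(x) exists and is finite, and |r(t,x) − ℓ(t,y)| ≤ 2·sup|r₀| for all t, x, y; assume the characteristic flows and the correspondence map β(t,α) exist and are C¹. Suppose α ∈ ℝ satisfies: r₀'(α)·(r₀(α) + r₀(+∞)) < 0, r₀'(x)·r₀(α) < 0 for every x ≥ α, and either r₀(α)·r₀(+∞) > 0 or r₀(+∞) = 0. Then for every t ∈ [0,T) such that −2(A(t) − 1)/√(k(η_L(t,α))) + (2 − A(t)⁻¹)/√(k(2r₀(α))) ≥ 0, the time integral of the weighted Riemann derivative q along the forward characteristic has sign opposite to r₀'(α): r₀'(α)·∫₀ᵗ q(τ, x₁(τ,α)) dτ ≤ 0. -/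
open Real Set Filter MeasureTheory

noncomputable section

/-- `L(u) = (1/2)(u·√(1+u²) + arcsinh u)`, the antiderivative of `Q(ξ) = √(1+ξ²)` with `L 0 = 0`. -/
def Lfun (u : ℝ) : ℝ := (1/2) * (u * Real.sqrt (1 + u^2) + Real.arsinh u)

/-- `û₁(η) = L⁻¹(−η/2)`. -/
def u1hat (η : ℝ) : ℝ := Function.invFun Lfun (-η/2)

/-- `k(η) = √(1 + û₁(η)²)`. -/
def kfun (η : ℝ) : ℝ := Real.sqrt (1 + (u1hat η)^2)

/-- `f(η) = k'(η)/√(k(η))`. -/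
def ffun (η : ℝ) : ℝ := deriv kfun η / Real.sqrt (kfun η)

/-- `A(t) = exp(λ t / 2)`. -/
def Afun (lam t : ℝ) : ℝ := Real.exp (lam * t / 2)

/-- `η(t,x) = r(t,x) − ℓ(t,x)`. -/
def etafun (r l : ℝ → ℝ → ℝ) (t x : ℝ) : ℝ := r t x - l t x

/-- Weighted Riemann derivative `p(t,x) = A(t)·√(k(η(t,x)))·∂ₓr(t,x)`. -/
def pfun (lam : ℝ) (r l : ℝ → ℝ → ℝ) (t x : ℝ) : ℝ :=
  Afun lam t * Real.sqrt (kfun (etafun r l t x)) * deriv (fun y => r t y) x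

/-- Weighted Riemann derivative `q(t,x) = A(t)·√(k(η(t,x)))·∂ₓℓ(t,x)`. -/
def qfun (lam : ℝ) (r l : ℝ → ℝ → ℝ) (t x : ℝ) : ℝ :=
  Afun lam t * Real.sqrt (kfun (etafun r l t x)) * deriv (fun y => l t y) x

/-!
By the symmetry `(r, ℓ) ↦ (-r, -ℓ)` assume `r₀ α > 0`. The forward characteristic through `α` and
the backward one through `β = β(t, α)` bound a triangle with apex `(t, x₁ t)`, and `r₀` decreases
from `M = r₀ α` to `m = r₀ β ≥ 0` on its base. A maximum principle confines `r` and `-ℓ` to `[m, M]`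
in the triangle; damping along its two edges then gives `η_L(τ) ≤ η(τ) ≤ 2 M` along `x₁` and
`2 M - η(t) ≥ (M - m) / A(t)`.

Along `x₁` one has `η' = -2 k ∂ₓℓ`, so with `W(τ) = ∫ 1 / √k` from `η(τ)` to `η(0) = 2 M`, the
product `A W` has derivative `λ/2 A W + 2 q`, and `2 ∫ q = A(t) W(t) - ∫ λ/2 A W`. As `1 / √k` is
decreasing on `[0, ∞)`, `W(t)` is at least `(M - m) / (A(t) √k(2 M))` and every `W(τ)` is at most
`(M - m) (2 - 1 / A(τ)) / √k(η_L(t))`; the selection inequality compares the two.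
-/

section SoundSpeed

lemma Lfun_eq_sinh (u : ℝ) : Lfun u = (1 / 4) * sinh (2 * arsinh u) + (1 / 2) * arsinh u := by
  rw [Lfun, sinh_two_mul, sinh_arsinh, cosh_arsinh]
  ring

lemma strictMono_Lfun : StrictMono Lfun := fun a b hab ↦ by
  have harsinh : arsinh a < arsinh b := arsinh_lt_arsinh.2 hab
  have hsinh : sinh (2 * arsinh a) < sinh (2 * arsinh b) := sinh_lt_sinh.2 (by linarith)
  rw [Lfun_eq_sinh, Lfun_eq_sinh]
  linarith

lemma Lfun_neg (u : ℝ) : Lfun (-u) = -Lfun u := by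
  simp only [Lfun, arsinh_neg, neg_sq]
  ring

lemma continuous_Lfun : Continuous Lfun := by
  unfold Lfun
  have := continuous_arsinh
  fun_prop

lemma half_le_Lfun {u : ℝ} (hu : 0 ≤ u) : u / 2 ≤ Lfun u := by
  have harsinh : 0 ≤ arsinh u := arsinh_nonneg_iff.2 hu
  have hsqrt : 1 ≤ √(1 + u ^ 2) := one_le_sqrt.2 (by linarith [sq_nonneg u])
  unfold Lfun
  nlinarith

lemma tendsto_Lfun_atTop : Tendsto Lfun atTop atTop :=
  tendsto_atTop_mono' _ ((eventually_ge_atTop 0).mono fun _ ↦ half_le_Lfun)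
    (tendsto_id.atTop_div_const two_pos)

lemma tendsto_Lfun_atBot : Tendsto Lfun atBot atBot :=
  ((tendsto_neg_atTop_atBot.comp tendsto_Lfun_atTop).comp tendsto_neg_atBot_atTop).congr
    fun u ↦ by simp only [Function.comp_apply, Lfun_neg, neg_neg]

lemma surjective_Lfun : Function.Surjective Lfun :=
  continuous_Lfun.surjective tendsto_Lfun_atTop tendsto_Lfun_atBot

lemma Lfun_u1hat (η : ℝ) : Lfun (u1hat η) = -η / 2 := Function.invFun_eq (surjective_Lfun _)

lemma u1hat_neg (η : ℝ) : u1hat (-η) = -u1hat η := by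
  apply strictMono_Lfun.injective
  rw [Lfun_neg, Lfun_u1hat, Lfun_u1hat]
  ring

lemma u1hat_zero : u1hat 0 = 0 := by simpa [self_eq_neg] using u1hat_neg 0

lemma antitone_u1hat : Antitone u1hat := fun a b hab ↦ by
  rw [← strictMono_Lfun.le_iff_le, Lfun_u1hat, Lfun_u1hat]
  linarith

lemma continuous_u1hat : Continuous u1hat := by
  let L := strictMono_Lfun.orderIsoOfSurjective Lfun surjective_Lfun
  have hu : u1hat = fun η ↦ L.symm (-η / 2) :=
    funext fun η ↦ L.injective ((Lfun_u1hat η).trans (L.apply_symm_apply _).symm)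
  rw [hu]
  exact L.symm.continuous.comp (by fun_prop)

lemma continuous_kfun : Continuous kfun := by
  unfold kfun
  have := continuous_u1hat
  fun_prop

lemma kfun_neg (η : ℝ) : kfun (-η) = kfun η := by simp only [kfun, u1hat_neg, neg_sq]

lemma kfun_pos (η : ℝ) : 0 < kfun η := sqrt_pos.2 (by positivity)

lemma monotoneOn_kfun : MonotoneOn kfun (Ici 0) := fun a ha b _ hab ↦ by
  have hua : u1hat a ≤ 0 := u1hat_zero ▸ antitone_u1hat ha
  have hub : u1hat b ≤ u1hat a := antitone_u1hat hab
  exact sqrt_le_sqrt (by nlinarith)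

/-- The weight `1 / √k`, whose product with the speed `k` is the factor `√k` in `qfun`. -/
def invSqrtK (η : ℝ) : ℝ := (√(kfun η))⁻¹

lemma invSqrtK_pos (η : ℝ) : 0 < invSqrtK η := inv_pos.2 (sqrt_pos.2 (kfun_pos η))

lemma continuous_invSqrtK : Continuous invSqrtK :=
  continuous_kfun.sqrt.inv₀ fun η ↦ (sqrt_pos.2 (kfun_pos η)).ne'

lemma antitoneOn_invSqrtK : AntitoneOn invSqrtK (Ici 0) := fun _ ha _ hb hab ↦
  inv_anti₀ (sqrt_pos.2 (kfun_pos _)) (sqrt_le_sqrt (monotoneOn_kfun ha hb hab))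

lemma invSqrtK_mul_kfun (η : ℝ) : invSqrtK η * kfun η = √(kfun η) := by
  rw [invSqrtK, inv_mul_eq_div, div_sqrt]

end SoundSpeed

section Damping

variable {lam : ℝ}

lemma Afun_pos (lam t : ℝ) : 0 < Afun lam t := exp_pos _

lemma Afun_zero (lam : ℝ) : Afun lam 0 = 1 := by simp [Afun]

lemma hasDerivAt_Afun (lam t : ℝ) : HasDerivAt (Afun lam) (lam / 2 * Afun lam t) t := by
  have h : HasDerivAt (fun a ↦ lam * a / 2) (lam / 2) t := by
    simpa using ((hasDerivAt_id t).const_mul lam).div_const 2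
  exact h.exp.congr_deriv (mul_comm _ _)

lemma continuous_Afun (lam : ℝ) : Continuous (Afun lam) :=
  continuous_iff_continuousAt.2 fun t ↦ (hasDerivAt_Afun lam t).continuousAt

lemma monotone_Afun (hlam : 0 ≤ lam) : Monotone (Afun lam) := fun _ _ hst ↦
  exp_le_exp.2 (by have := mul_le_mul_of_nonneg_left hst hlam; linarith)

lemma one_sub_inv_Afun_le (lam t : ℝ) : 1 - (Afun lam t)⁻¹ ≤ lam * t / 2 := by
  rw [Afun, ← exp_neg]
  linarith [add_one_le_exp (-(lam * t / 2))]

lemma sub_le_Afun_mul_sub {t c : ℝ} {f g : ℝ → ℝ} (hlam : 0 ≤ lam) (ht : 0 ≤ t)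
    (hf : ContinuousOn f (Icc 0 t))
    (hf' : ∀ τ ∈ Ioo 0 t, HasDerivAt f (-(lam / 2) * (f τ - g τ)) τ)
    (hg : ∀ τ ∈ Ioo 0 t, c ≤ g τ) : f 0 - c ≤ Afun lam t * (f t - c) := by
  have hmono : MonotoneOn (fun τ ↦ Afun lam τ * (f τ - c)) (Icc 0 t) := by
    refine monotoneOn_of_hasDerivWithinAt_nonneg (convex_Icc 0 t)
      (f' := fun τ ↦ lam / 2 * Afun lam τ * (g τ - c))
      ((continuous_Afun lam).continuousOn.mul (hf.sub continuousOn_const))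
      (fun τ hτ ↦ ?_) (fun τ hτ ↦ ?_) <;> rw [interior_Icc] at hτ
    · refine (((hasDerivAt_Afun lam τ).mul
        ((hf' τ hτ).sub_const c)).congr_deriv ?_).hasDerivWithinAt
      ring
    · have hgc : 0 ≤ g τ - c := sub_nonneg.2 (hg τ hτ)
      have hA := Afun_pos lam τ
      positivity
  simpa [Afun_zero] using hmono (left_mem_Icc.2 ht) (right_mem_Icc.2 ht) ht

/-- The lower bound `η_L` for `η` along a forward characteristic, in terms of the initial values
`m = r₀ (β t α)` and `M = r₀ α`. -/
def etaLower (lam t m M : ℝ) : ℝ :=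
  (Afun lam t)⁻¹ * (m + M) + 2 * m * (1 - (Afun lam t)⁻¹)

lemma etaLower_eq (lam t m M : ℝ) : etaLower lam t m M = 2 * m + (Afun lam t)⁻¹ * (M - m) := by
  rw [etaLower]
  ring

lemma etaLower_neg (lam t m M : ℝ) : etaLower lam t (-m) (-M) = -etaLower lam t m M := by
  rw [etaLower, etaLower]
  ring

lemma two_mul_sub_etaLower (lam t m M : ℝ) :
    2 * M - etaLower lam t m M = (M - m) * (2 - (Afun lam t)⁻¹) := by
  rw [etaLower]
  ring

lemma antitone_etaLower {m M : ℝ} (hlam : 0 ≤ lam) (hmM : m ≤ M) :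
    Antitone fun t ↦ etaLower lam t m M := fun s t hst ↦ by
  have hA : (Afun lam t)⁻¹ ≤ (Afun lam s)⁻¹ := inv_anti₀ (Afun_pos lam s) (monotone_Afun hlam hst)
  simp only [etaLower_eq]
  gcongr

lemma etaLower_nonneg {m M : ℝ} (lam t : ℝ) (hm : 0 ≤ m) (hmM : m ≤ M) :
    0 ≤ etaLower lam t m M := by
  rw [etaLower_eq]
  exact add_nonneg (by positivity) (mul_nonneg (inv_pos.2 (Afun_pos lam t)).le (sub_nonneg.2 hmM))

lemma integral_half_mul_Afun_mul_two_sub_inv (lam t : ℝ) :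
    ∫ τ in 0..t, lam / 2 * Afun lam τ * (2 - (Afun lam τ)⁻¹) =
      2 * (Afun lam t - 1) - lam * t / 2 := by
  have hderiv (τ : ℝ) : HasDerivAt (fun τ ↦ 2 * Afun lam τ - lam / 2 * τ)
      (lam / 2 * Afun lam τ * (2 - (Afun lam τ)⁻¹)) τ := by
    refine (((hasDerivAt_Afun lam τ).const_mul 2).sub
      ((hasDerivAt_id τ).const_mul (lam / 2))).congr_deriv ?_
    have hA := (Afun_pos lam τ).ne'
    field_simp
  have hcont : Continuous fun τ ↦ lam / 2 * Afun lam τ * (2 - (Afun lam τ)⁻¹) := by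
    have hA := continuous_Afun lam
    exact (by fun_prop : Continuous fun τ ↦ lam / 2 * Afun lam τ).mul
      (continuous_const.sub (hA.inv₀ fun τ ↦ (Afun_pos lam τ).ne'))
  rw [intervalIntegral.integral_eq_sub_of_hasDerivAt (fun τ _ ↦ hderiv τ)
    (hcont.intervalIntegrable 0 t), Afun_zero]
  ring

end Damping

section DirectionalDerivative

/-- `f` is differentiable at `(τ, x)` and its derivative in the space-time direction `(1, v)`,
i.e. `∂ₜf + v ∂ₓf`, equals `g`. -/
def HasDerivAlong (f : ℝ → ℝ → ℝ) (v g τ x : ℝ) : Prop :=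
  ∃ D : ℝ × ℝ →L[ℝ] ℝ, HasFDerivAt (Function.uncurry f) D (τ, x) ∧ D (1, v) = g

variable {f : ℝ → ℝ → ℝ} {v g τ x : ℝ}

lemma HasDerivAlong.neg (h : HasDerivAlong f v g τ x) : HasDerivAlong (-f) v (-g) τ x := by
  obtain ⟨D, hD, rfl⟩ := h
  exact ⟨-D, hD.neg, rfl⟩

lemma HasDerivAlong.comp_curve {c : ℝ → ℝ} (h : HasDerivAlong f v g τ (c τ))
    (hc : HasDerivAt c v τ) : HasDerivAt (fun a ↦ f a (c a)) g τ := by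
  obtain ⟨D, hD, rfl⟩ := h
  exact HasFDerivAt.comp_hasDerivAt (f := fun a ↦ (a, c a)) τ hD ((hasDerivAt_id τ).prodMk hc)

lemma HasDerivAlong.of_differentiableAt (h : DifferentiableAt ℝ (Function.uncurry f) (τ, x))
    (v : ℝ) :
    HasDerivAlong f v (deriv (fun a ↦ f a x) τ + v * deriv (f τ) x) τ x := by
  have hD := h.hasFDerivAt
  have htime : HasDerivAt (fun a ↦ f a x) _ τ :=
    HasFDerivAt.comp_hasDerivAt (f := fun a ↦ (a, x)) τ hD
      ((hasDerivAt_id τ).prodMk (hasDerivAt_const τ x))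
  have hspace : HasDerivAt (f τ) _ x :=
    HasFDerivAt.comp_hasDerivAt (f := fun y ↦ (τ, y)) x hD
      ((hasDerivAt_const x τ).prodMk (hasDerivAt_id x))
  refine ⟨_, hD, ?_⟩
  rw [htime.deriv, hspace.deriv, ← smul_eq_mul v, ← map_smul, ← map_add]
  simp

lemma eventually_lt_left_of_hasDerivWithinAt_neg {f : ℝ → ℝ} {f' x : ℝ}
    (h : HasDerivWithinAt f f' (Iio x) x) (hf' : f' < 0) :
    ∀ᶠ y in nhdsWithin x (Iio x), f x < f y := by
  filter_upwards [h.limsup_slope_le' (lt_irrefl x) hf', self_mem_nhdsWithin] with y hslope hy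
  rw [slope_def_field, div_lt_iff_of_neg (sub_neg.2 hy)] at hslope
  linarith

lemma HasDerivAlong.eventually_lt_left {c : ℝ → ℝ} {ε : ℝ} (h : HasDerivAlong f v g τ (c τ))
    (hc : HasDerivAt c v τ) (hg : g < ε) :
    ∀ᶠ a in nhdsWithin τ (Iio τ), f τ (c τ) - ε * τ < f a (c a) - ε * a :=
  eventually_lt_left_of_hasDerivWithinAt_neg
    ((h.comp_curve hc).sub ((hasDerivAt_id τ).const_mul ε)).hasDerivWithinAt (by simpa using hg)

end DirectionalDerivative

section CharacteristicTriangle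

/-- `x₁` and `x₂` are a forward and a backward characteristic of the nonnegative speed field `K`
which meet at time `t`. -/
structure IsCharTriangle (K : ℝ → ℝ → ℝ) (t : ℝ) (x₁ x₂ : ℝ → ℝ) : Prop where
  speed_nonneg : ∀ τ x, 0 ≤ K τ x
  hasDerivAt_left : ∀ τ ∈ Icc 0 t, HasDerivAt x₁ (K τ (x₁ τ)) τ
  hasDerivAt_right : ∀ τ ∈ Icc 0 t, HasDerivAt x₂ (-K τ (x₂ τ)) τ
  apex : x₁ t = x₂ t

/-- The space-time region between the curves `x₁` and `x₂` over the time interval `[0, t]`. -/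
def charTriangle (t : ℝ) (x₁ x₂ : ℝ → ℝ) : Set (ℝ × ℝ) :=
  {p | p.1 ∈ Icc 0 t ∧ p.2 ∈ Icc (x₁ p.1) (x₂ p.1)}

variable {t : ℝ} {K : ℝ → ℝ → ℝ} {x₁ x₂ : ℝ → ℝ}

lemma isCompact_charTriangle (h₁ : ContinuousOn x₁ (Icc 0 t)) (h₂ : ContinuousOn x₂ (Icc 0 t)) :
    IsCompact (charTriangle t x₁ x₂) := by
  obtain ⟨a, ha⟩ := isCompact_Icc.bddBelow_image h₁
  obtain ⟨b, hb⟩ := isCompact_Icc.bddAbove_image h₂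
  have hcont : ContinuousOn (fun p : ℝ × ℝ ↦ (p.2 - x₁ p.1, x₂ p.1 - p.2))
      (Icc 0 t ×ˢ Icc a b) :=
    (continuousOn_snd.sub (h₁.comp continuousOn_fst fun _ hp ↦ hp.1)).prodMk
      ((h₂.comp continuousOn_fst fun _ hp ↦ hp.1).sub continuousOn_snd)
  have hclosed := hcont.preimage_isClosed_of_isClosed (isClosed_Icc.prod isClosed_Icc)
    (isClosed_Ici.prod isClosed_Ici : IsClosed (Ici (0 : ℝ) ×ˢ Ici (0 : ℝ)))
  convert (isCompact_Icc.prod isCompact_Icc).of_isClosed_subset hclosed inter_subset_left using 1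
  ext ⟨τ, x⟩
  simp only [charTriangle, mem_ofPred_eq, mem_inter_iff, mem_prod, mem_preimage, mem_Ici,
    sub_nonneg, mem_Icc (a := x₁ τ)]
  refine ⟨fun ⟨hτ, hx⟩ ↦ ⟨⟨hτ, ?_⟩, hx⟩, fun ⟨⟨hτ, _⟩, hx⟩ ↦ ⟨hτ, hx⟩⟩
  exact ⟨(ha (mem_image_of_mem x₁ hτ)).trans hx.1, hx.2.trans (hb (mem_image_of_mem x₂ hτ))⟩

namespace IsCharTriangle

lemma continuousOn_left (hΔ : IsCharTriangle K t x₁ x₂) : ContinuousOn x₁ (Icc 0 t) :=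
  fun τ hτ ↦ (hΔ.hasDerivAt_left τ hτ).continuousAt.continuousWithinAt

lemma continuousOn_right (hΔ : IsCharTriangle K t x₁ x₂) : ContinuousOn x₂ (Icc 0 t) :=
  fun τ hτ ↦ (hΔ.hasDerivAt_right τ hτ).continuousAt.continuousWithinAt

lemma monotoneOn_left (hΔ : IsCharTriangle K t x₁ x₂) : MonotoneOn x₁ (Icc 0 t) :=
  monotoneOn_of_hasDerivWithinAt_nonneg (convex_Icc 0 t) hΔ.continuousOn_left
    (fun τ hτ ↦ (hΔ.hasDerivAt_left τ (interior_subset hτ)).hasDerivWithinAt)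
    (fun _ _ ↦ hΔ.speed_nonneg _ _)

lemma antitoneOn_right (hΔ : IsCharTriangle K t x₁ x₂) : AntitoneOn x₂ (Icc 0 t) :=
  antitoneOn_of_hasDerivWithinAt_nonpos (convex_Icc 0 t) hΔ.continuousOn_right
    (fun τ hτ ↦ (hΔ.hasDerivAt_right τ (interior_subset hτ)).hasDerivWithinAt)
    (fun _ _ ↦ neg_nonpos.2 (hΔ.speed_nonneg _ _))

lemma left_le_right (hΔ : IsCharTriangle K t x₁ x₂) {τ : ℝ} (hτ : τ ∈ Icc 0 t) : x₁ τ ≤ x₂ τ :=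
  have ht := right_mem_Icc.2 (hτ.1.trans hτ.2)
  calc x₁ τ ≤ x₁ t := hΔ.monotoneOn_left hτ ht hτ.2
    _ = x₂ t := hΔ.apex
    _ ≤ x₂ τ := hΔ.antitoneOn_right hτ ht hτ.2

end IsCharTriangle

/- On the left edge the curve is `x₁` itself; elsewhere a straight line stays inside. -/
lemma exists_forward_curve_mem_Icc {τ x v : ℝ} (hv : 0 ≤ v) (hx : x ∈ Icc (x₁ τ) (x₂ τ))
    (hcont : ContinuousAt x₁ τ) (hedge : x = x₁ τ → HasDerivAt x₁ v τ)
    (hle : ∀ᶠ a in nhdsWithin τ (Iio τ), x₁ a ≤ x₂ a)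
    (hanti : ∀ᶠ a in nhdsWithin τ (Iio τ), x₂ τ ≤ x₂ a) :
    ∃ c : ℝ → ℝ, c τ = x ∧ HasDerivAt c v τ ∧
      ∀ᶠ a in nhdsWithin τ (Iio τ), c a ∈ Icc (x₁ a) (x₂ a) := by
  rcases hx.1.eq_or_lt with heq | hlt
  · exact ⟨x₁, heq, hedge heq.symm, hle.mono fun a ha ↦ ⟨le_rfl, ha⟩⟩
  · have hline : HasDerivAt (fun a ↦ x + v * (a - τ)) v τ := by
      simpa using (((hasDerivAt_id τ).sub_const τ).const_mul v).const_add x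
    have hgt := hcont.eventually_lt hline.continuousAt (by simpa using hlt)
    refine ⟨_, by simp, hline, ?_⟩
    filter_upwards [hgt.filter_mono nhdsWithin_le_nhds, hanti, self_mem_nhdsWithin]
      with a hgt hx₂ ha
    have hback : v * (a - τ) ≤ 0 := mul_nonpos_of_nonneg_of_nonpos hv (sub_nonpos.2 (le_of_lt ha))
    exact ⟨hgt.le, by linarith [hx.2]⟩

lemma exists_backward_curve_mem_Icc {τ x v : ℝ} (hv : 0 ≤ v) (hx : x ∈ Icc (x₁ τ) (x₂ τ))
    (hcont : ContinuousAt x₂ τ) (hedge : x = x₂ τ → HasDerivAt x₂ (-v) τ)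
    (hle : ∀ᶠ a in nhdsWithin τ (Iio τ), x₁ a ≤ x₂ a)
    (hmono : ∀ᶠ a in nhdsWithin τ (Iio τ), x₁ a ≤ x₁ τ) :
    ∃ c : ℝ → ℝ, c τ = x ∧ HasDerivAt c (-v) τ ∧
      ∀ᶠ a in nhdsWithin τ (Iio τ), c a ∈ Icc (x₁ a) (x₂ a) := by
  obtain ⟨c, hc, hc', hmem⟩ := exists_forward_curve_mem_Icc (x₁ := -x₂) (x₂ := -x₁) (x := -x) hv
    ⟨neg_le_neg hx.2, neg_le_neg hx.1⟩ hcont.neg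
    (fun h ↦ by simpa using (hedge (neg_injective h)).neg)
    (hle.mono fun _ ↦ neg_le_neg) (hmono.mono fun _ ↦ neg_le_neg)
  exact ⟨-c, by simp [hc], hc'.neg, hmem.mono fun a ha ↦ ⟨le_neg.2 ha.2, neg_le.2 ha.1⟩⟩

end CharacteristicTriangle

section MaximumPrinciple

/-- `(r, s)` is transported with speeds `K` and `-K` over `(0, t]`, each component relaxing towards
the other at rate `lam / 2`. For a solution `(r, ℓ)` of the diagonal system, `s = -ℓ`. -/
structure IsDampedPair (lam t : ℝ) (K r s : ℝ → ℝ → ℝ) : Prop where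
  continuousOn_fst : ContinuousOn (Function.uncurry r) (Icc 0 t ×ˢ univ)
  continuousOn_snd : ContinuousOn (Function.uncurry s) (Icc 0 t ×ˢ univ)
  hasDerivAlong_fst : ∀ τ ∈ Ioc 0 t, ∀ x,
    HasDerivAlong r (K τ x) (-(lam / 2) * (r τ x - s τ x)) τ x
  hasDerivAlong_snd : ∀ τ ∈ Ioc 0 t, ∀ x,
    HasDerivAlong s (-K τ x) (-(lam / 2) * (s τ x - r τ x)) τ x

variable {lam t M m : ℝ} {K r s : ℝ → ℝ → ℝ} {x₁ x₂ : ℝ → ℝ}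

lemma IsDampedPair.neg (h : IsDampedPair lam t K r s) : IsDampedPair lam t K (-r) (-s) where
  continuousOn_fst := h.continuousOn_fst.neg
  continuousOn_snd := h.continuousOn_snd.neg
  hasDerivAlong_fst τ hτ x := by
    convert (h.hasDerivAlong_fst τ hτ x).neg using 1
    simp only [Pi.neg_apply]
    ring
  hasDerivAlong_snd τ hτ x := by
    convert (h.hasDerivAlong_snd τ hτ x).neg using 1
    simp only [Pi.neg_apply]
    ring

namespace IsCharTriangle

/- At a point where `s ≤ r` the damping makes `r` nonincreasing in the forward characteristic
direction, so `r - ε τ` is larger slightly earlier on a curve with that direction; symmetrically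
for `s`. -/
lemma exists_max_sub_mul_lt (hΔ : IsCharTriangle K t x₁ x₂) (h : IsDampedPair lam t K r s)
    (hlam : 0 ≤ lam) {ε τ x : ℝ} (hε : 0 < ε) (hτ : τ ∈ Ioc 0 t) (hx : x ∈ Icc (x₁ τ) (x₂ τ)) :
    ∃ p ∈ charTriangle t x₁ x₂,
      max (r τ x) (s τ x) - ε * τ < max (r p.1 p.2) (s p.1 p.2) - ε * p.1 := by
  have hτ' : τ ∈ Icc 0 t := ⟨hτ.1.le, hτ.2⟩
  have hleft : ∀ᶠ a in nhdsWithin τ (Iio τ), a ∈ Icc 0 t ∧ a ≤ τ := by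
    filter_upwards [Ioo_mem_nhdsLT hτ.1] with a ha
    exact ⟨⟨ha.1.le, ha.2.le.trans hτ.2⟩, ha.2.le⟩
  have hle := hleft.mono fun a ha ↦ hΔ.left_le_right ha.1
  rcases le_total (s τ x) (r τ x) with hsr | hrs
  · obtain ⟨c, rfl, hc, hmem⟩ := exists_forward_curve_mem_Icc (hΔ.speed_nonneg τ x) hx
      (hΔ.hasDerivAt_left τ hτ').continuousAt (fun h ↦ h ▸ hΔ.hasDerivAt_left τ hτ') hle
      (hleft.mono fun a ha ↦ hΔ.antitoneOn_right ha.1 hτ' ha.2)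
    have hdecr : -(lam / 2) * (r τ (c τ) - s τ (c τ)) < ε := by nlinarith
    obtain ⟨a, hlt, hmem, ha, -⟩ :=
      (((h.hasDerivAlong_fst τ hτ _).eventually_lt_left hc hdecr).and (hmem.and hleft)).exists
    refine ⟨(a, c a), ⟨ha, hmem⟩, ?_⟩
    rw [max_eq_left hsr]
    exact hlt.trans_le (sub_le_sub_right (le_max_left _ _) _)
  · obtain ⟨c, rfl, hc, hmem⟩ := exists_backward_curve_mem_Icc (hΔ.speed_nonneg τ x) hx
      (hΔ.hasDerivAt_right τ hτ').continuousAt (fun h ↦ h ▸ hΔ.hasDerivAt_right τ hτ') hle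
      (hleft.mono fun a ha ↦ hΔ.monotoneOn_left ha.1 hτ' ha.2)
    have hdecr : -(lam / 2) * (s τ (c τ) - r τ (c τ)) < ε := by nlinarith
    obtain ⟨a, hlt, hmem, ha, -⟩ :=
      (((h.hasDerivAlong_snd τ hτ _).eventually_lt_left hc hdecr).and (hmem.and hleft)).exists
    refine ⟨(a, c a), ⟨ha, hmem⟩, ?_⟩
    rw [max_eq_right hrs]
    exact hlt.trans_le (sub_le_sub_right (le_max_right _ _) _)

lemma max_sub_mul_le (hΔ : IsCharTriangle K t x₁ x₂) (h : IsDampedPair lam t K r s)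
    (hlam : 0 ≤ lam) (hr : ∀ x ∈ Icc (x₁ 0) (x₂ 0), r 0 x ≤ M)
    (hs : ∀ x ∈ Icc (x₁ 0) (x₂ 0), s 0 x ≤ M) {ε : ℝ} (hε : 0 < ε) {p : ℝ × ℝ}
    (hp : p ∈ charTriangle t x₁ x₂) : max (r p.1 p.2) (s p.1 p.2) - ε * p.1 ≤ M := by
  have hsub : charTriangle t x₁ x₂ ⊆ Icc 0 t ×ˢ univ := fun p hp ↦ ⟨hp.1, mem_univ _⟩
  have hcont : ContinuousOn (fun p : ℝ × ℝ ↦ max (r p.1 p.2) (s p.1 p.2) - ε * p.1)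
      (charTriangle t x₁ x₂) :=
    ((h.continuousOn_fst.mono hsub).sup (h.continuousOn_snd.mono hsub)).sub (by fun_prop)
  obtain ⟨⟨τ, x⟩, ⟨hτ, hx⟩, hmax⟩ :=
    (isCompact_charTriangle hΔ.continuousOn_left hΔ.continuousOn_right).exists_isMaxOn ⟨p, hp⟩ hcont
  refine (hmax hp).trans ?_
  rcases hτ.1.eq_or_lt with rfl | hpos
  · simpa using ⟨hr x hx, hs x hx⟩
  · obtain ⟨q, hq, hlt⟩ := hΔ.exists_max_sub_mul_lt h hlam hε ⟨hpos, hτ.2⟩ hx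
    exact absurd (hmax hq) (not_le.2 hlt)

theorem max_le_of_base (hΔ : IsCharTriangle K t x₁ x₂) (h : IsDampedPair lam t K r s)
    (hlam : 0 ≤ lam) (hr : ∀ x ∈ Icc (x₁ 0) (x₂ 0), r 0 x ≤ M)
    (hs : ∀ x ∈ Icc (x₁ 0) (x₂ 0), s 0 x ≤ M) {p : ℝ × ℝ} (hp : p ∈ charTriangle t x₁ x₂) :
    max (r p.1 p.2) (s p.1 p.2) ≤ M := by
  have hlim : Tendsto (fun ε ↦ max (r p.1 p.2) (s p.1 p.2) - ε * p.1) (nhdsWithin 0 (Ioi 0))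
      (nhds (max (r p.1 p.2) (s p.1 p.2) - 0 * p.1)) :=
    (Continuous.tendsto (by fun_prop) 0).mono_left nhdsWithin_le_nhds
  rw [zero_mul, sub_zero] at hlim
  refine le_of_tendsto hlim ?_
  filter_upwards [self_mem_nhdsWithin] with ε hε using hΔ.max_sub_mul_le h hlam hr hs hε hp

theorem mem_Icc_of_base (hΔ : IsCharTriangle K t x₁ x₂) (h : IsDampedPair lam t K r s)
    (hlam : 0 ≤ lam) (hr : ∀ x ∈ Icc (x₁ 0) (x₂ 0), r 0 x ∈ Icc m M)
    (hs : ∀ x ∈ Icc (x₁ 0) (x₂ 0), s 0 x ∈ Icc m M) {τ x : ℝ}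
    (hp : (τ, x) ∈ charTriangle t x₁ x₂) : r τ x ∈ Icc m M ∧ s τ x ∈ Icc m M := by
  have hM := max_le_iff.1 (hΔ.max_le_of_base h hlam (fun x hx ↦ (hr x hx).2)
    (fun x hx ↦ (hs x hx).2) hp)
  have hm := max_le_iff.1 (hΔ.max_le_of_base (M := -m) h.neg hlam
    (fun x hx ↦ neg_le_neg (hr x hx).1) (fun x hx ↦ neg_le_neg (hs x hx).1) hp)
  exact ⟨⟨neg_le_neg_iff.1 hm.1, hM.1⟩, neg_le_neg_iff.1 hm.2, hM.2⟩

lemma left_mem_charTriangle (hΔ : IsCharTriangle K t x₁ x₂) {τ : ℝ} (hτ : τ ∈ Icc 0 t) :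
    (τ, x₁ τ) ∈ charTriangle t x₁ x₂ := ⟨hτ, le_rfl, hΔ.left_le_right hτ⟩

lemma right_mem_charTriangle (hΔ : IsCharTriangle K t x₁ x₂) {τ : ℝ} (hτ : τ ∈ Icc 0 t) :
    (τ, x₂ τ) ∈ charTriangle t x₁ x₂ := ⟨hτ, hΔ.left_le_right hτ, le_rfl⟩

end IsCharTriangle

end MaximumPrinciple

section CharacteristicBounds

variable {lam t M m : ℝ} {K r s : ℝ → ℝ → ℝ} {x₁ x₂ : ℝ → ℝ}

lemma IsDampedPair.hasDerivAt_left (h : IsDampedPair lam t K r s) (hΔ : IsCharTriangle K t x₁ x₂)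
    {τ : ℝ} (hτ : τ ∈ Ioc 0 t) :
    HasDerivAt (fun τ ↦ r τ (x₁ τ)) (-(lam / 2) * (r τ (x₁ τ) - s τ (x₁ τ))) τ :=
  (h.hasDerivAlong_fst τ hτ _).comp_curve (hΔ.hasDerivAt_left τ ⟨hτ.1.le, hτ.2⟩)

lemma IsDampedPair.hasDerivAt_right (h : IsDampedPair lam t K r s) (hΔ : IsCharTriangle K t x₁ x₂)
    {τ : ℝ} (hτ : τ ∈ Ioc 0 t) :
    HasDerivAt (fun τ ↦ s τ (x₂ τ)) (-(lam / 2) * (s τ (x₂ τ) - r τ (x₂ τ))) τ :=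
  (h.hasDerivAlong_snd τ hτ _).comp_curve (hΔ.hasDerivAt_right τ ⟨hτ.1.le, hτ.2⟩)

lemma continuousOn_comp_curve {f : ℝ → ℝ → ℝ} {c : ℝ → ℝ} {I : Set ℝ}
    (hf : ContinuousOn (Function.uncurry f) (I ×ˢ univ)) (hc : ContinuousOn c I) :
    ContinuousOn (fun τ ↦ f τ (c τ)) I :=
  hf.comp (continuousOn_id.prodMk hc) fun _ hτ ↦ ⟨hτ, mem_univ _⟩

namespace IsCharTriangle

lemma sub_le_Afun_mul_sub_left (hΔ : IsCharTriangle K t x₁ x₂) (h : IsDampedPair lam t K r s)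
    (hlam : 0 ≤ lam) (hs : ∀ τ ∈ Icc 0 t, m ≤ s τ (x₁ τ)) {τ : ℝ} (hτ : τ ∈ Icc 0 t) :
    r 0 (x₁ 0) - m ≤ Afun lam τ * (r τ (x₁ τ) - m) := by
  have hcont := continuousOn_comp_curve h.continuousOn_fst hΔ.continuousOn_left
  exact sub_le_Afun_mul_sub hlam hτ.1 (hcont.mono (Icc_subset_Icc_right hτ.2))
    (fun a ha ↦ h.hasDerivAt_left hΔ ⟨ha.1, ha.2.le.trans hτ.2⟩)
    (fun a ha ↦ hs a ⟨ha.1.le, ha.2.le.trans hτ.2⟩)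

lemma sub_le_Afun_mul_sub_right (hΔ : IsCharTriangle K t x₁ x₂) (h : IsDampedPair lam t K r s)
    (hlam : 0 ≤ lam) (hr : ∀ τ ∈ Icc 0 t, r τ (x₂ τ) ≤ M) {τ : ℝ} (hτ : τ ∈ Icc 0 t) :
    M - s 0 (x₂ 0) ≤ Afun lam τ * (M - s τ (x₂ τ)) := by
  have hcont := continuousOn_comp_curve h.neg.continuousOn_snd hΔ.continuousOn_right
  have hdecay := sub_le_Afun_mul_sub (c := -M) hlam hτ.1 (hcont.mono (Icc_subset_Icc_right hτ.2))
    (fun a ha ↦ h.neg.hasDerivAt_right hΔ ⟨ha.1, ha.2.le.trans hτ.2⟩)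
    (fun a ha ↦ neg_le_neg (hr a ⟨ha.1.le, ha.2.le.trans hτ.2⟩))
  simpa only [Pi.neg_apply, neg_sub_neg] using hdecay

lemma add_mem_Icc_etaLower (hΔ : IsCharTriangle K t x₁ x₂) (h : IsDampedPair lam t K r s)
    (hlam : 0 ≤ lam) (hr : ∀ x ∈ Icc (x₁ 0) (x₂ 0), r 0 x ∈ Icc m M)
    (hs : ∀ x ∈ Icc (x₁ 0) (x₂ 0), s 0 x ∈ Icc m M) {τ : ℝ} (hτ : τ ∈ Icc 0 t) :
    r τ (x₁ τ) + s τ (x₁ τ) ∈ Icc (etaLower lam τ m (r 0 (x₁ 0))) (2 * M) := by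
  have hbound (a : ℝ) (ha : a ∈ Icc 0 t) := hΔ.mem_Icc_of_base h hlam hr hs
    (hΔ.left_mem_charTriangle ha)
  have hdecay := hΔ.sub_le_Afun_mul_sub_left h hlam (fun a ha ↦ (hbound a ha).2.1) hτ
  rw [← inv_mul_le_iff₀ (Afun_pos lam τ)] at hdecay
  obtain ⟨⟨-, hrM⟩, hms, hsM⟩ := hbound τ hτ
  rw [etaLower_eq]
  exact ⟨by linarith, by linarith⟩

lemma sub_le_Afun_mul_sub_add (hΔ : IsCharTriangle K t x₁ x₂) (h : IsDampedPair lam t K r s)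
    (hlam : 0 ≤ lam) (hr : ∀ x ∈ Icc (x₁ 0) (x₂ 0), r 0 x ∈ Icc m M)
    (hs : ∀ x ∈ Icc (x₁ 0) (x₂ 0), s 0 x ∈ Icc m M) (ht : 0 ≤ t) :
    M - s 0 (x₂ 0) ≤ Afun lam t * (2 * M - (r t (x₁ t) + s t (x₁ t))) := by
  have hbound (a : ℝ) (ha : a ∈ Icc 0 t) := hΔ.mem_Icc_of_base h hlam hr hs
    (hΔ.right_mem_charTriangle ha)
  have htt := right_mem_Icc.2 ht
  have hdecay := hΔ.sub_le_Afun_mul_sub_right h hlam (fun a ha ↦ (hbound a ha).1.2) htt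
  refine hdecay.trans (mul_le_mul_of_nonneg_left ?_ (Afun_pos lam t).le)
  rw [hΔ.apex]
  linarith [(hbound t htt).1.2]

end IsCharTriangle

end CharacteristicBounds

section WeightIntegral

variable {w : ℝ → ℝ} {a b : ℝ}

lemma integral_le_mul_sub_of_antitoneOn (hab : a ≤ b) (hw : AntitoneOn w (Icc a b)) :
    ∫ x in a..b, w x ≤ w a * (b - a) := by
  have hint : IntervalIntegrable w volume a b :=
    AntitoneOn.intervalIntegrable ((uIcc_of_le hab).symm ▸ hw)
  have hle := intervalIntegral.integral_mono_on hab hint (intervalIntegrable_const (c := w a))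
    fun x hx ↦ hw (left_mem_Icc.2 hab) hx hx.1
  rwa [intervalIntegral.integral_const, smul_eq_mul, mul_comm] at hle

lemma mul_sub_le_integral_of_antitoneOn (hab : a ≤ b) (hw : AntitoneOn w (Icc a b)) :
    w b * (b - a) ≤ ∫ x in a..b, w x := by
  have hint : IntervalIntegrable w volume a b :=
    AntitoneOn.intervalIntegrable ((uIcc_of_le hab).symm ▸ hw)
  have hle := intervalIntegral.integral_mono_on hab (intervalIntegrable_const (c := w b)) hint
    fun x hx ↦ hw hx (right_mem_Icc.2 hab) hx.2
  rwa [intervalIntegral.integral_const, smul_eq_mul, mul_comm] at hle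

lemma hasDerivAt_integral_left (hw : Continuous w) (b x : ℝ) :
    HasDerivAt (fun x ↦ ∫ y in x..b, w y) (-w x) x :=
  intervalIntegral.integral_hasDerivAt_left (hw.intervalIntegrable x b)
    hw.aestronglyMeasurable.stronglyMeasurableAtFilter hw.continuousAt

lemma continuous_integral_left (hw : Continuous w) (b : ℝ) :
    Continuous fun x ↦ ∫ y in x..b, w y :=
  continuous_iff_continuousAt.2 fun x ↦ (hasDerivAt_integral_left hw b x).continuousAt

variable {lam t m M : ℝ} {e : ℝ → ℝ}

lemma mul_sub_le_of_selection (hlam : 0 ≤ lam) (ht : 0 ≤ t) (hm : 0 ≤ m) (hmM : m ≤ M)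
    (hanti : AntitoneOn w (Ici 0))
    (hsel : 2 * (Afun lam t - 1) * w (etaLower lam t m M) ≤ (2 - (Afun lam t)⁻¹) * w (2 * M))
    (hpos : 0 ≤ w (2 * M)) :
    w (etaLower lam t m M) * (2 * (Afun lam t - 1) - lam * t / 2) ≤ w (2 * M) := by
  set wL := w (etaLower lam t m M)
  have hlt : 0 ≤ lam * t / 2 := by positivity
  have hle : etaLower lam t m M ≤ 2 * M := by
    have hA : (Afun lam t)⁻¹ ≤ 1 := inv_le_one_of_one_le₀ (Afun_zero lam ▸ monotone_Afun hlam ht)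
    rw [← sub_nonneg, two_mul_sub_etaLower]
    exact mul_nonneg (sub_nonneg.2 hmM) (by linarith)
  have hwL : w (2 * M) ≤ wL := hanti (etaLower_nonneg lam t hm hmM)
    (mem_Ici.2 ((etaLower_nonneg lam t hm hmM).trans hle)) hle
  have hdecay : (1 - (Afun lam t)⁻¹) * w (2 * M) ≤ lam * t / 2 * wL :=
    (mul_le_mul_of_nonneg_right (one_sub_inv_Afun_le lam t) hpos).trans
      (mul_le_mul_of_nonneg_left hwL hlt)
  linarith

lemma integral_le_of_mem_Icc_etaLower (hlam : 0 ≤ lam) (hm : 0 ≤ m) (hmM : m ≤ M)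
    (hanti : AntitoneOn w (Ici 0)) (hpos : ∀ x, 0 ≤ w x) {τ y : ℝ} (hτ : τ ≤ t)
    (hy : y ∈ Icc (etaLower lam τ m M) (2 * M)) :
    ∫ x in y..2 * M, w x ≤
      w (etaLower lam t m M) * ((M - m) * (2 - (Afun lam τ)⁻¹)) := by
  have hL := etaLower_nonneg lam t hm hmM
  have hLy : etaLower lam t m M ≤ y := (antitone_etaLower hlam hmM hτ).trans hy.1
  have hy₀ : 0 ≤ y := hL.trans hLy
  calc ∫ x in y..2 * M, w x ≤ w y * (2 * M - y) :=
        integral_le_mul_sub_of_antitoneOn hy.2 (hanti.mono fun x hx ↦ hy₀.trans hx.1)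
    _ ≤ w (etaLower lam t m M) * (2 * M - etaLower lam τ m M) := by
        gcongr
        · exact sub_nonneg.2 hy.2
        · exact hpos _
        · exact hanti hL hy₀ hLy
        · exact hy.1
    _ = w (etaLower lam t m M) * ((M - m) * (2 - (Afun lam τ)⁻¹)) := by
        rw [two_mul_sub_etaLower]

lemma integral_Afun_mul_integral_le (hlam : 0 ≤ lam) (ht : 0 ≤ t) (hm : 0 ≤ m) (hmM : m ≤ M)
    (hw : Continuous w) (hanti : AntitoneOn w (Ici 0)) (hpos : ∀ x, 0 ≤ w x)
    (he : ContinuousOn e (Icc 0 t))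
    (hmem : ∀ τ ∈ Icc 0 t, e τ ∈ Icc (etaLower lam τ m M) (2 * M)) :
    ∫ τ in 0..t, lam / 2 * Afun lam τ * ∫ x in e τ..2 * M, w x ≤
      w (etaLower lam t m M) * (M - m) * (2 * (Afun lam t - 1) - lam * t / 2) := by
  have hA := continuous_Afun lam
  have hAinv : Continuous fun τ ↦ (Afun lam τ)⁻¹ := hA.inv₀ fun τ ↦ (Afun_pos lam τ).ne'
  have hcont : ContinuousOn (fun τ ↦ lam / 2 * Afun lam τ * ∫ x in e τ..2 * M, w x) (Icc 0 t) :=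
    (hA.const_mul _).continuousOn.mul ((continuous_integral_left hw _).comp_continuousOn he)
  have hbound : Continuous fun τ ↦
      w (etaLower lam t m M) * (M - m) * (lam / 2 * Afun lam τ * (2 - (Afun lam τ)⁻¹)) := by
    fun_prop
  rw [← integral_half_mul_Afun_mul_two_sub_inv, ← intervalIntegral.integral_const_mul]
  refine intervalIntegral.integral_mono_on ht (hcont.intervalIntegrable_of_Icc ht)
    (hbound.intervalIntegrable 0 t) fun τ hτ ↦ ?_
  have hAτ : 0 ≤ lam / 2 * Afun lam τ := by have := Afun_pos lam τ; positivity
  calc lam / 2 * Afun lam τ * ∫ x in e τ..2 * M, w x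
      ≤ lam / 2 * Afun lam τ * (w (etaLower lam t m M) * ((M - m) * (2 - (Afun lam τ)⁻¹))) :=
        mul_le_mul_of_nonneg_left
          (integral_le_of_mem_Icc_etaLower hlam hm hmM hanti hpos hτ.2 (hmem τ hτ)) hAτ
    _ = _ := by ring

lemma integral_Afun_mul_integral_le_of_selection (hlam : 0 ≤ lam) (ht : 0 ≤ t) (hm : 0 ≤ m)
    (hmM : m ≤ M) (hw : Continuous w) (hanti : AntitoneOn w (Ici 0)) (hpos : ∀ x, 0 ≤ w x)
    (he : ContinuousOn e (Icc 0 t))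
    (hmem : ∀ τ ∈ Icc 0 t, e τ ∈ Icc (etaLower lam τ m M) (2 * M))
    (hapex : M - m ≤ Afun lam t * (2 * M - e t))
    (hsel : 2 * (Afun lam t - 1) * w (etaLower lam t m M) ≤ (2 - (Afun lam t)⁻¹) * w (2 * M)) :
    ∫ τ in 0..t, lam / 2 * Afun lam τ * ∫ x in e τ..2 * M, w x ≤
      Afun lam t * ∫ x in e t..2 * M, w x := by
  have het := hmem t (right_mem_Icc.2 ht)
  have het₀ : 0 ≤ e t := (etaLower_nonneg lam t hm hmM).trans het.1
  calc ∫ τ in 0..t, lam / 2 * Afun lam τ * ∫ x in e τ..2 * M, w x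
      ≤ w (etaLower lam t m M) * (M - m) * (2 * (Afun lam t - 1) - lam * t / 2) :=
        integral_Afun_mul_integral_le hlam ht hm hmM hw hanti hpos he hmem
    _ = (M - m) * (w (etaLower lam t m M) * (2 * (Afun lam t - 1) - lam * t / 2)) := by ring
    _ ≤ (M - m) * w (2 * M) :=
        mul_le_mul_of_nonneg_left (mul_sub_le_of_selection hlam ht hm hmM hanti hsel (hpos _))
          (sub_nonneg.2 hmM)
    _ ≤ Afun lam t * (2 * M - e t) * w (2 * M) := mul_le_mul_of_nonneg_right hapex (hpos _)
    _ = Afun lam t * (w (2 * M) * (2 * M - e t)) := by ring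
    _ ≤ Afun lam t * ∫ x in e t..2 * M, w x :=
        mul_le_mul_of_nonneg_left
          (mul_sub_le_integral_of_antitoneOn het.2 (hanti.mono fun x hx ↦ het₀.trans hx.1))
          (Afun_pos lam t).le

end WeightIntegral

section DiagonalSystem

/-- `(r, l)` is a `C¹` solution on `[0, T) × ℝ` of the damped diagonal system. The equations are
imposed only at positive times, where the time derivative is two-sided. -/
structure IsDiagonalSolution (lam T : ℝ) (r l : ℝ → ℝ → ℝ) : Prop where
  contDiffOn_r : ContDiffOn ℝ 1 (Function.uncurry r) (Ico 0 T ×ˢ univ)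
  contDiffOn_l : ContDiffOn ℝ 1 (Function.uncurry l) (Ico 0 T ×ˢ univ)
  eq_r : ∀ t ∈ Ioo 0 T, ∀ x,
    deriv (fun s ↦ r s x) t + kfun (etafun r l t x) * deriv (r t) x = -(lam / 2) * (r t x + l t x)
  eq_l : ∀ t ∈ Ioo 0 T, ∀ x,
    deriv (fun s ↦ l s x) t - kfun (etafun r l t x) * deriv (l t) x = -(lam / 2) * (r t x + l t x)

variable {lam T t : ℝ} {r l : ℝ → ℝ → ℝ} {x : ℝ → ℝ}

lemma etafun_neg (r l : ℝ → ℝ → ℝ) (t x : ℝ) : etafun (-r) (-l) t x = -etafun r l t x := by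
  simp only [etafun, Pi.neg_apply]
  ring

lemma qfun_neg (lam : ℝ) (r l : ℝ → ℝ → ℝ) (t x : ℝ) :
    qfun lam (-r) (-l) t x = -qfun lam r l t x := by
  simp only [qfun, etafun_neg, kfun_neg, Pi.neg_apply, deriv.fun_neg, mul_neg]

lemma continuousOn_uncurry_deriv {f : ℝ → ℝ → ℝ} {I : Set ℝ} (hI : UniqueDiffOn ℝ I)
    (hf : ContDiffOn ℝ 1 (Function.uncurry f) (I ×ˢ univ)) :
    ContinuousOn (Function.uncurry fun t ↦ deriv (f t)) (I ×ˢ univ) := by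
  have hfderiv := hf.continuousOn_fderivWithin (hI.prod uniqueDiffOn_univ) le_rfl
  refine (hfderiv.clm_apply (continuousOn_const (c := ((0, 1) : ℝ × ℝ)))).congr fun p hp ↦ ?_
  have hp' := (hf.differentiableOn one_ne_zero p hp).hasFDerivWithinAt
  exact (hp'.comp_hasDerivAt (f := fun y ↦ (p.1, y)) p.2
    ((hasDerivAt_const p.2 p.1).prodMk (hasDerivAt_id p.2))
    (Eventually.of_forall fun y ↦ ⟨hp.1, mem_univ y⟩)).deriv

namespace IsDiagonalSolution

lemma neg (h : IsDiagonalSolution lam T r l) : IsDiagonalSolution lam T (-r) (-l) where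
  contDiffOn_r := h.contDiffOn_r.neg
  contDiffOn_l := h.contDiffOn_l.neg
  eq_r t ht x := by
    have := h.eq_r t ht x
    simp only [etafun_neg, kfun_neg, Pi.neg_apply, deriv.fun_neg, deriv.neg]
    linarith
  eq_l t ht x := by
    have := h.eq_l t ht x
    simp only [etafun_neg, kfun_neg, Pi.neg_apply, deriv.fun_neg, deriv.neg]
    linarith

lemma differentiableAt_r (h : IsDiagonalSolution lam T r l) (ht : t ∈ Ioo 0 T) (x : ℝ) :
    DifferentiableAt ℝ (Function.uncurry r) (t, x) :=
  (h.contDiffOn_r.contDiffAt (prod_mem_nhds (Ico_mem_nhds ht.1 ht.2) univ_mem)).differentiableAt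
    one_ne_zero

lemma differentiableAt_l (h : IsDiagonalSolution lam T r l) (ht : t ∈ Ioo 0 T) (x : ℝ) :
    DifferentiableAt ℝ (Function.uncurry l) (t, x) :=
  (h.contDiffOn_l.contDiffAt (prod_mem_nhds (Ico_mem_nhds ht.1 ht.2) univ_mem)).differentiableAt
    one_ne_zero

lemma isDampedPair (h : IsDiagonalSolution lam T r l) (ht : t < T) :
    IsDampedPair lam t (fun τ x ↦ kfun (etafun r l τ x)) r (-l) where
  continuousOn_fst := h.contDiffOn_r.continuousOn.mono
    (prod_mono_left (Icc_subset_Ico_right ht))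
  continuousOn_snd := (h.contDiffOn_l.continuousOn.mono
    (prod_mono_left (Icc_subset_Ico_right ht))).neg
  hasDerivAlong_fst τ hτ x := by
    have hτ' : τ ∈ Ioo 0 T := ⟨hτ.1, hτ.2.trans_lt ht⟩
    convert HasDerivAlong.of_differentiableAt (h.differentiableAt_r hτ' x) _ using 1
    rw [h.eq_r τ hτ' x, Pi.neg_apply, Pi.neg_apply, sub_neg_eq_add]
  hasDerivAlong_snd τ hτ x := by
    have hτ' : τ ∈ Ioo 0 T := ⟨hτ.1, hτ.2.trans_lt ht⟩
    convert (HasDerivAlong.of_differentiableAt (h.differentiableAt_l hτ' x) _).neg using 1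
    rw [Pi.neg_apply, Pi.neg_apply]
    linarith [h.eq_l τ hτ' x]

lemma hasDerivAt_etafun (h : IsDiagonalSolution lam T r l) (ht : t ∈ Ioo 0 T)
    (hx : HasDerivAt x (kfun (etafun r l t (x t))) t) :
    HasDerivAt (fun τ ↦ etafun r l τ (x τ))
      (-2 * kfun (etafun r l t (x t)) * deriv (l t) (x t)) t := by
  have hr := (HasDerivAlong.of_differentiableAt (h.differentiableAt_r ht _) _).comp_curve hx
  have hl := (HasDerivAlong.of_differentiableAt (h.differentiableAt_l ht _) _).comp_curve hx
  exact (hr.sub hl).congr_deriv (by linarith [h.eq_r t ht (x t), h.eq_l t ht (x t)])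

lemma continuousOn_etafun (h : IsDiagonalSolution lam T r l) (ht : t < T)
    (hx : ContinuousOn x (Icc 0 t)) : ContinuousOn (fun τ ↦ etafun r l τ (x τ)) (Icc 0 t) :=
  have hsub := prod_mono_left (t := univ) (Icc_subset_Ico_right ht)
  (continuousOn_comp_curve (h.contDiffOn_r.continuousOn.mono hsub) hx).sub
    (continuousOn_comp_curve (h.contDiffOn_l.continuousOn.mono hsub) hx)

lemma continuousOn_qfun (h : IsDiagonalSolution lam T r l) (ht : t < T)
    (hx : ContinuousOn x (Icc 0 t)) : ContinuousOn (fun τ ↦ qfun lam r l τ (x τ)) (Icc 0 t) :=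
  have hderiv := (continuousOn_uncurry_deriv (uniqueDiffOn_Ico 0 T) h.contDiffOn_l).mono
    (prod_mono_left (Icc_subset_Ico_right ht))
  ((continuous_Afun lam).continuousOn.mul
    (continuous_kfun.comp_continuousOn (h.continuousOn_etafun ht hx)).sqrt).mul
    (continuousOn_comp_curve hderiv hx)

/- The weight `1 / √k` turns `η' = -2 k ∂ₓℓ` into the factor `√k ∂ₓℓ` of `q`. -/
lemma hasDerivAt_Afun_mul_integral_invSqrtK (h : IsDiagonalSolution lam T r l) (ht : t ∈ Ioo 0 T)
    (hx : HasDerivAt x (kfun (etafun r l t (x t))) t) (b : ℝ) :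
    HasDerivAt (fun τ ↦ Afun lam τ * ∫ y in etafun r l τ (x τ)..b, invSqrtK y)
      (lam / 2 * Afun lam t * (∫ y in etafun r l t (x t)..b, invSqrtK y) +
        2 * qfun lam r l t (x t)) t := by
  have hW := (hasDerivAt_integral_left continuous_invSqrtK b _).comp t (h.hasDerivAt_etafun ht hx)
  refine ((hasDerivAt_Afun lam t).mul hW).congr_deriv ?_
  simp only [qfun, ← invSqrtK_mul_kfun, Function.comp_apply]
  ring

lemma two_mul_integral_qfun (h : IsDiagonalSolution lam T r l) (ht : t ∈ Ico 0 T)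
    (hx : ∀ τ ∈ Icc 0 t, HasDerivAt x (kfun (etafun r l τ (x τ))) τ) :
    2 * ∫ τ in 0..t, qfun lam r l τ (x τ) =
      Afun lam t * (∫ y in etafun r l t (x t)..etafun r l 0 (x 0), invSqrtK y) -
        ∫ τ in 0..t, lam / 2 * Afun lam τ *
          ∫ y in etafun r l τ (x τ)..etafun r l 0 (x 0), invSqrtK y := by
  have hxc : ContinuousOn x (Icc 0 t) := fun τ hτ ↦ (hx τ hτ).continuousAt.continuousWithinAt
  let W (τ : ℝ) := ∫ y in etafun r l τ (x τ)..etafun r l 0 (x 0), invSqrtK y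
  have hW : ContinuousOn W (Icc 0 t) :=
    (continuous_integral_left continuous_invSqrtK _).comp_continuousOn
      (h.continuousOn_etafun ht.2 hxc)
  have hA := (continuous_Afun lam).continuousOn (s := Icc 0 t)
  have hintW : IntervalIntegrable (fun τ ↦ lam / 2 * Afun lam τ * W τ) volume 0 t :=
    ((hA.const_mul _).mul hW).intervalIntegrable_of_Icc ht.1
  have hintq : IntervalIntegrable (fun τ ↦ 2 * qfun lam r l τ (x τ)) volume 0 t :=
    ((h.continuousOn_qfun ht.2 hxc).const_mul 2).intervalIntegrable_of_Icc ht.1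
  have hftc := intervalIntegral.integral_eq_sub_of_hasDerivAt_of_le ht.1 (hA.mul hW)
    (fun τ hτ ↦ h.hasDerivAt_Afun_mul_integral_invSqrtK ⟨hτ.1, hτ.2.trans ht.2⟩
      (hx τ (Ioo_subset_Icc_self hτ)) _)
    (hintW.add hintq)
  rw [intervalIntegral.integral_add hintW hintq, intervalIntegral.integral_const_mul] at hftc
  simp only [W, Pi.mul_apply, intervalIntegral.integral_same, mul_zero, sub_zero] at hftc
  linarith

end IsDiagonalSolution

end DiagonalSystem

section SignOfIntegral

lemma antitoneOn_const_mul_of_deriv_mul_neg {f : ℝ → ℝ} {c : ℝ} {D : Set ℝ} (hD : Convex ℝ D)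
    (hf : ∀ x ∈ D, deriv f x * c < 0) : AntitoneOn (fun x ↦ c * f x) D := by
  have hdiff : ∀ x ∈ D, HasDerivAt (fun x ↦ c * f x) (c * deriv f x) x := fun x hx ↦
    (differentiableAt_of_deriv_ne_zero
      (left_ne_zero_of_mul (hf x hx).ne)).hasDerivAt.const_mul c
  refine antitoneOn_of_hasDerivWithinAt_nonpos hD
    (fun x hx ↦ (hdiff x hx).continuousAt.continuousWithinAt)
    (fun x hx ↦ (hdiff x (interior_subset hx)).hasDerivWithinAt) fun x hx ↦ ?_
  rw [mul_comm]
  exact (hf x (interior_subset hx)).le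

lemma mul_nonneg_of_tendsto_of_deriv_mul_neg {f : ℝ → ℝ} {a c L : ℝ}
    (hlim : Tendsto f atTop (nhds L)) (hf : ∀ x, a ≤ x → deriv f x * c < 0) (hL : 0 ≤ c * L)
    {x : ℝ} (hx : a ≤ x) : 0 ≤ c * f x := by
  have hanti := antitoneOn_const_mul_of_deriv_mul_neg (convex_Ici a) hf
  refine hL.trans (le_of_tendsto (hlim.const_mul c) ?_)
  filter_upwards [eventually_ge_atTop x] with y hxy using hanti hx (hx.trans hxy) hxy

variable {lam T t α β : ℝ} {r l : ℝ → ℝ → ℝ} {r₀ x₁ x₂ : ℝ → ℝ}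

lemma IsDiagonalSolution.integral_qfun_nonneg (h : IsDiagonalSolution lam T r l) (hlam : 0 ≤ lam)
    (ht : t ∈ Ico 0 T) (hΔ : IsCharTriangle (fun τ x ↦ kfun (etafun r l τ x)) t x₁ x₂)
    (hl : ∀ x, l 0 x = -r 0 x) (hanti : AntitoneOn (r 0) (Icc (x₁ 0) (x₂ 0)))
    (hpos : 0 ≤ r 0 (x₂ 0))
    (hsel : 2 * (Afun lam t - 1) * invSqrtK (etaLower lam t (r 0 (x₂ 0)) (r 0 (x₁ 0))) ≤
      (2 - (Afun lam t)⁻¹) * invSqrtK (2 * r 0 (x₁ 0))) :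
    0 ≤ ∫ τ in 0..t, qfun lam r l τ (x₁ τ) := by
  have hbase : x₁ 0 ≤ x₂ 0 := hΔ.left_le_right (left_mem_Icc.2 ht.1)
  have hmM := hanti (left_mem_Icc.2 hbase) (right_mem_Icc.2 hbase) hbase
  have hpair := h.isDampedPair ht.2
  have hr : ∀ x ∈ Icc (x₁ 0) (x₂ 0), r 0 x ∈ Icc (r 0 (x₂ 0)) (r 0 (x₁ 0)) := fun x hx ↦
    ⟨hanti hx (right_mem_Icc.2 hbase) hx.2, hanti (left_mem_Icc.2 hbase) hx hx.1⟩
  have hs : ∀ x ∈ Icc (x₁ 0) (x₂ 0), (-l) 0 x ∈ Icc (r 0 (x₂ 0)) (r 0 (x₁ 0)) := fun x hx ↦ by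
    simpa [hl] using hr x hx
  have hη (τ : ℝ) : etafun r l τ (x₁ τ) = r τ (x₁ τ) + (-l) τ (x₁ τ) := sub_eq_add_neg _ _
  have hη₀ : etafun r l 0 (x₁ 0) = 2 * r 0 (x₁ 0) := by
    rw [etafun, hl]
    ring
  have hmem : ∀ τ ∈ Icc 0 t, etafun r l τ (x₁ τ) ∈
      Icc (etaLower lam τ (r 0 (x₂ 0)) (r 0 (x₁ 0))) (2 * r 0 (x₁ 0)) := fun τ hτ ↦
    hη τ ▸ hΔ.add_mem_Icc_etaLower hpair hlam hr hs hτ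
  have hapex := hΔ.sub_le_Afun_mul_sub_add hpair hlam hr hs ht.1
  rw [Pi.neg_apply, Pi.neg_apply, hl, neg_neg, ← hη] at hapex
  have hle := integral_Afun_mul_integral_le_of_selection hlam ht.1 hpos hmM continuous_invSqrtK
    antitoneOn_invSqrtK (fun η ↦ (invSqrtK_pos η).le)
    (h.continuousOn_etafun ht.2 hΔ.continuousOn_left) hmem hapex hsel
  have hid := h.two_mul_integral_qfun ht hΔ.hasDerivAt_left
  rw [hη₀] at hid
  linarith

theorem integral_of_q_sign_along_forward_characteristic_general
    (h : IsDiagonalSolution lam T r l) (hlam : 0 ≤ lam) (ht : t ∈ Ico 0 T)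
    (hΔ : IsCharTriangle (fun τ x ↦ kfun (etafun r l τ x)) t x₁ x₂)
    (hr0 : ∀ x, r 0 x = r₀ x) (hl0 : ∀ x, l 0 x = -r₀ x) (hα : x₁ 0 = α) (hβ : x₂ 0 = β)
    (hderiv : ∀ x ∈ Icc α β, deriv r₀ x * r₀ α < 0) (hsign : 0 ≤ r₀ α * r₀ β)
    (hsel : 0 ≤ -2 * (Afun lam t - 1) / √(kfun (etaLower lam t (r₀ β) (r₀ α))) +
      (2 - (Afun lam t)⁻¹) / √(kfun (2 * r₀ α))) :
    deriv r₀ α * ∫ τ in 0..t, qfun lam r l τ (x₁ τ) ≤ 0 := by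
  obtain rfl : r 0 = r₀ := funext hr0
  subst hα hβ
  have hanti := antitoneOn_const_mul_of_deriv_mul_neg (convex_Icc _ _) hderiv
  have hα := hderiv _ (left_mem_Icc.2 (hΔ.left_le_right (left_mem_Icc.2 ht.1)))
  rw [div_eq_mul_inv, div_eq_mul_inv] at hsel
  rcases (right_ne_zero_of_mul hα.ne).lt_or_gt with hneg | hpos
  · have hΔ' : IsCharTriangle (fun τ x ↦ kfun (etafun (-r) (-l) τ x)) t x₁ x₂ := by
      simpa only [etafun_neg, kfun_neg] using hΔ
    have hq := h.neg.integral_qfun_nonneg hlam ht hΔ' (fun x ↦ congrArg Neg.neg (hl0 x))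
      (fun x hx y hy hxy ↦ neg_le_neg ((mul_le_mul_left_of_neg hneg).1 (hanti hx hy hxy)))
      (neg_nonneg.2 (nonpos_of_mul_nonneg_right hsign hneg))
      (by
        simp only [Pi.neg_apply, etaLower_neg, mul_neg, invSqrtK, kfun_neg]
        linarith)
    simp only [qfun_neg, intervalIntegral.integral_neg, neg_nonneg] at hq
    exact mul_nonpos_of_nonneg_of_nonpos (pos_of_mul_neg_left hα hneg.le).le hq
  · have hq := h.integral_qfun_nonneg hlam ht hΔ hl0
      (fun x hx y hy hxy ↦ le_of_mul_le_mul_left (hanti hx hy hxy) hpos)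
      (nonneg_of_mul_nonneg_right hsign hpos) (by unfold invSqrtK; linarith)
    exact mul_nonpos_of_nonpos_of_nonneg (neg_of_mul_neg_left hα hpos.le).le hq

end SignOfIntegral

/-- whenever the selection inequality holds at time `t`, the integral
of the weighted Riemann derivative `q` along the forward characteristic has sign
opposite to `r₀'(α)`. -/
theorem integral_of_q_sign_along_forward_characteristic
    (lam T : ℝ) (hlam : 0 < lam)
    (r l : ℝ → ℝ → ℝ) (r₀ : ℝ → ℝ) (rinf : ℝ)
    (hreg_r : ContDiffOn ℝ 1 (Function.uncurry r) (Set.Ico 0 T ×ˢ (Set.univ : Set ℝ)))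
    (hreg_l : ContDiffOn ℝ 1 (Function.uncurry l) (Set.Ico 0 T ×ˢ (Set.univ : Set ℝ)))
    (hsys_r : ∀ t ∈ Set.Ico (0:ℝ) T, ∀ x : ℝ,
      deriv (fun s => r s x) t + kfun (etafun r l t x) * deriv (fun y => r t y) x
        = -(lam/2) * (r t x + l t x))
    (hsys_l : ∀ t ∈ Set.Ico (0:ℝ) T, ∀ x : ℝ,
      deriv (fun s => l s x) t - kfun (etafun r l t x) * deriv (fun y => l t y) x
        = -(lam/2) * (r t x + l t x))
    (hr0 : ∀ x : ℝ, r 0 x = r₀ x)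
    (hl0 : ∀ x : ℝ, l 0 x = -r₀ x)
    (hr₀reg : ContDiff ℝ 1 r₀)
    (hr₀bdd : ∃ C : ℝ, ∀ x : ℝ, |r₀ x| ≤ C)
    (hrinf : Filter.Tendsto r₀ Filter.atTop (nhds rinf))
    (hetabdd : ∀ t ∈ Set.Ico (0:ℝ) T, ∀ x y : ℝ,
      |r t x - l t y| ≤ 2 * ⨆ z : ℝ, |r₀ z|)
    -- the forward characteristic starting from α and the backward characteristic flow
    (α : ℝ) (x₁ : ℝ → ℝ) (x₂ : ℝ → ℝ → ℝ)
    (hx₁0 : x₁ 0 = α)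
    (hx₁ : ∀ t ∈ Set.Ico (0:ℝ) T,
      HasDerivAt x₁ (kfun (etafun r l t (x₁ t))) t)
    (hflowreg₂ : ContDiffOn ℝ 1 (Function.uncurry x₂) (Set.Ico 0 T ×ˢ (Set.univ : Set ℝ)))
    (hx₂0 : ∀ b : ℝ, x₂ 0 b = b)
    (hx₂ : ∀ b : ℝ, ∀ t ∈ Set.Ico (0:ℝ) T,
      HasDerivAt (fun s => x₂ s b) (-(kfun (etafun r l t (x₂ t b)))) t)
    -- the correspondence map t ↦ β(t,α)
    (bmap : ℝ → ℝ)
    (hbmapreg : ContDiffOn ℝ 1 bmap (Set.Ico 0 T))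
    (hbmap : ∀ t ∈ Set.Ico (0:ℝ) T, x₁ t = x₂ t (bmap t))
    -- conditions (69) on the initial profile at α
    (hcond₁ : deriv r₀ α * (r₀ α + rinf) < 0)
    (hcond₂ : ∀ x : ℝ, α ≤ x → deriv r₀ x * r₀ α < 0)
    -- the additional sign condition
    (hcond₃ : 0 < r₀ α * rinf ∨ rinf = 0)
    -- the function η_L
    (etaL : ℝ → ℝ)
    (hetaL : ∀ t : ℝ, etaL t = (Afun lam t)⁻¹ * (r₀ (bmap t) + r₀ α)
      + 2 * r₀ (bmap t) * (1 - (Afun lam t)⁻¹)) :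
    ∀ t ∈ Set.Ico (0:ℝ) T,
      (0 ≤ -2 * (Afun lam t - 1) / Real.sqrt (kfun (etaL t))
          + (2 - (Afun lam t)⁻¹) / Real.sqrt (kfun (2 * r₀ α))) →
      deriv r₀ α * (∫ τ in (0:ℝ)..t, qfun lam r l τ (x₁ τ)) ≤ 0 := by
  intro t ht hsel
  have hsign : 0 ≤ r₀ α * rinf := hcond₃.elim le_of_lt fun h ↦ by simp [h]
  have hT : Icc 0 t ⊆ Ico 0 T := Icc_subset_Ico_right ht.2
  have hΔ : IsCharTriangle (fun τ x ↦ kfun (etafun r l τ x)) t x₁ (x₂ · (bmap t)) :=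
    ⟨fun _ _ ↦ (kfun_pos _).le, fun τ hτ ↦ hx₁ τ (hT hτ), fun τ hτ ↦ hx₂ _ τ (hT hτ), hbmap t ht⟩
  have hαβ : α ≤ bmap t := by
    simpa only [hx₁0, hx₂0] using hΔ.left_le_right (left_mem_Icc.2 ht.1)
  have hsol : IsDiagonalSolution lam T r l :=
    ⟨hreg_r, hreg_l, fun τ hτ ↦ hsys_r τ (Ioo_subset_Ico_self hτ),
      fun τ hτ ↦ hsys_l τ (Ioo_subset_Ico_self hτ)⟩
  exact integral_of_q_sign_along_forward_characteristic_general hsol hlam.le ht hΔ hr0 hl0 hx₁0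
    (hx₂0 _) (fun x hx ↦ hcond₂ x hx.1)
    (mul_nonneg_of_tendsto_of_deriv_mul_neg hrinf hcond₂ hsign hαβ)
    (by simpa only [hetaL, etaLower] using hsel)
end
end

section
/- Let H : ℝ → ℝ be the function with H(0) = 0 and H'(η) = 1/√(k(η)). Then H is twice differentiable with H''(η) = −f(η)/(2·k(η)) for every η ∈ ℝ; since η·f(η) ≥ 0, it follows that H''(η) ≤ 0 for η ≥ 0 and H''(η) ≥ 0 for η ≤ 0, so H is concave on [0, ∞) and convex on (−∞, 0]. -/
open Real Set Filter MeasureTheory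

noncomputable section

/-!
Since `L' = √(1 + u²) > 0`, the inverse function theorem gives `û₁' = -1 / (2k)`, and the chain
rule gives `k' = -û₁ / (2k²)`. As `L` is increasing with `L 0 = 0`, the sign of `û₁ η = L⁻¹(-η/2)`
is opposite to that of `η`, so `f = k' / √k` has the sign of `η`. Differentiating `H' = k^(-1/2)`
yields `H'' = -k' / (2k^(3/2)) = -f / (2k)`, whose sign decides concavity and convexity.
-/

lemma continuous_invFun_of_strictMono {α β : Type*} [Nonempty α]
    [LinearOrder α] [TopologicalSpace α] [OrderTopology α]
    [PartialOrder β] [TopologicalSpace β] [OrderTopology β] {f : α → β}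
    (hf : StrictMono f) (hsurj : Function.Surjective f) : Continuous (Function.invFun f) :=
  (hf.orderIsoOfRightInverse f (Function.invFun f)
    (Function.rightInverse_invFun hsurj)).symm.continuous

lemma hasDerivAt_invFun_of_strictMono {f : ℝ → ℝ} {f' y : ℝ} (hf : StrictMono f)
    (hsurj : Function.Surjective f) (hderiv : HasDerivAt f f' (Function.invFun f y))
    (hf' : f' ≠ 0) : HasDerivAt (Function.invFun f) f'⁻¹ y :=
  hderiv.of_local_left_inverse (continuous_invFun_of_strictMono hf hsurj).continuousAt hf'
    (.of_forall (Function.rightInverse_invFun hsurj))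

lemma hasDerivAt_sqrt_one_add_sq (u : ℝ) :
    HasDerivAt (fun v : ℝ => √(1 + v ^ 2)) (u / √(1 + u ^ 2)) u := by
  have hpos : 0 < 1 + u ^ 2 := by positivity
  refine (((hasDerivAt_pow 2 u).const_add 1).sqrt hpos.ne').congr_deriv ?_
  field_simp
  simp

lemma hasDerivAt_one_div_sqrt {g : ℝ → ℝ} {g' x : ℝ} (hg : HasDerivAt g g' x) (hpos : 0 < g x) :
    HasDerivAt (fun y => 1 / √(g y)) (-(g' / √(g x)) / (2 * g x)) x := by
  have hsqrt : 0 < √(g x) := Real.sqrt_pos.2 hpos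
  simp only [one_div]
  refine ((hg.sqrt hpos.ne').inv hsqrt.ne').congr_deriv ?_
  rw [Real.sq_sqrt hpos.le]
  field_simp

lemma hasDerivAt_Lfun (u : ℝ) : HasDerivAt Lfun (√(1 + u ^ 2)) u := by
  have hprod : HasDerivAt (fun v : ℝ => v * √(1 + v ^ 2))
      (1 * √(1 + u ^ 2) + u * (u / √(1 + u ^ 2))) u :=
    (hasDerivAt_id' u).mul (hasDerivAt_sqrt_one_add_sq u)
  refine ((hprod.add (Real.hasDerivAt_arsinh u)).const_mul (1 / 2)).congr_deriv ?_
  have hsq : √(1 + u ^ 2) ^ 2 = 1 + u ^ 2 := Real.sq_sqrt (by positivity)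
  field_simp
  linear_combination -hsq

lemma Lfun_zero : Lfun 0 = 0 := by
  simp [Lfun]

lemma u1hat_nonpos_iff {η : ℝ} : u1hat η ≤ 0 ↔ 0 ≤ η := by
  rw [← strictMono_Lfun.le_iff_le, Lfun_u1hat, Lfun_zero]
  constructor <;> intro h <;> linarith

lemma u1hat_nonneg_iff {η : ℝ} : 0 ≤ u1hat η ↔ η ≤ 0 := by
  rw [← strictMono_Lfun.le_iff_le, Lfun_u1hat, Lfun_zero]
  constructor <;> intro h <;> linarith

lemma hasDerivAt_u1hat (η : ℝ) : HasDerivAt u1hat (-1 / (2 * kfun η)) η := by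
  have hinv : HasDerivAt (Function.invFun Lfun) (kfun η)⁻¹ (-η / 2) :=
    hasDerivAt_invFun_of_strictMono strictMono_Lfun surjective_Lfun
      (hasDerivAt_Lfun _) (kfun_pos η).ne'
  have hlin : HasDerivAt (fun x : ℝ => -x / 2) (-1 / 2) η := (hasDerivAt_neg η).div_const 2
  refine (hinv.comp η hlin).congr_deriv ?_
  field_simp

lemma hasDerivAt_kfun (η : ℝ) : HasDerivAt kfun (-u1hat η / (2 * kfun η ^ 2)) η := by
  have hcomp : HasDerivAt kfun (u1hat η / kfun η * (-1 / (2 * kfun η))) η :=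
    (hasDerivAt_sqrt_one_add_sq (u1hat η)).comp η (hasDerivAt_u1hat η)
  refine hcomp.congr_deriv ?_
  field_simp

lemma ffun_eq (η : ℝ) : ffun η = -u1hat η / (2 * kfun η ^ 2 * √(kfun η)) := by
  rw [ffun, (hasDerivAt_kfun η).deriv, div_div]

lemma ffun_nonneg_iff {η : ℝ} : 0 ≤ ffun η ↔ 0 ≤ η := by
  have hpos := kfun_pos η
  rw [ffun_eq, le_div_iff₀ (by positivity), zero_mul, neg_nonneg, u1hat_nonpos_iff]

lemma ffun_nonpos_iff {η : ℝ} : ffun η ≤ 0 ↔ η ≤ 0 := by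
  have hpos := kfun_pos η
  rw [ffun_eq, div_le_iff₀ (by positivity), zero_mul, neg_nonpos, u1hat_nonneg_iff]

lemma hasDerivAt_one_div_sqrt_kfun (η : ℝ) :
    HasDerivAt (fun x => 1 / √(kfun x)) (-ffun η / (2 * kfun η)) η := by
  rw [ffun, (hasDerivAt_kfun η).deriv]
  exact hasDerivAt_one_div_sqrt (hasDerivAt_kfun η) (kfun_pos η)

/-- the antiderivative `H` of `1/√k` with `H(0) = 0` satisfies
`H''(η) = −f(η)/(2k(η))`, hence `H` is concave on `[0,∞)` and convex on `(−∞,0]`. -/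
theorem Hfun_second_derivative_concavity
    (H : ℝ → ℝ) (hH0 : H 0 = 0)
    (hH' : ∀ η : ℝ, HasDerivAt H (1 / Real.sqrt (kfun η)) η) :
    (∀ η : ℝ, HasDerivAt (deriv H) (-ffun η / (2 * kfun η)) η) ∧
    (∀ η : ℝ, 0 ≤ η → deriv (deriv H) η ≤ 0) ∧
    (∀ η : ℝ, η ≤ 0 → 0 ≤ deriv (deriv H) η) ∧
    ConcaveOn ℝ (Set.Ici 0) H ∧
    ConvexOn ℝ (Set.Iic 0) H := by
  have hderiv : deriv H = fun η => 1 / √(kfun η) := funext fun η => (hH' η).deriv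
  have hderiv2 (η : ℝ) : HasDerivAt (deriv H) (-ffun η / (2 * kfun η)) η :=
    hderiv ▸ hasDerivAt_one_div_sqrt_kfun η
  have hden (η : ℝ) : 0 ≤ 2 * kfun η := (mul_pos two_pos (kfun_pos η)).le
  have hnonpos (η : ℝ) (hη : 0 ≤ η) : deriv (deriv H) η ≤ 0 := by
    rw [(hderiv2 η).deriv]
    exact div_nonpos_of_nonpos_of_nonneg (neg_nonpos.2 (ffun_nonneg_iff.2 hη)) (hden η)
  have hnonneg (η : ℝ) (hη : η ≤ 0) : 0 ≤ deriv (deriv H) η := by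
    rw [(hderiv2 η).deriv]
    exact div_nonneg (neg_nonneg.2 (ffun_nonpos_iff.2 hη)) (hden η)
  have hdiff : Differentiable ℝ H := fun η => (hH' η).differentiableAt
  have hdiff2 : Differentiable ℝ (deriv H) := fun η => (hderiv2 η).differentiableAt
  exact ⟨hderiv2, hnonpos, hnonneg,
    concaveOn_of_deriv2_nonpos' (convex_Ici 0) hdiff.differentiableOn hdiff2.differentiableOn
      hnonpos,
    convexOn_of_deriv2_nonneg' (convex_Iic 0) hdiff.differentiableOn hdiff2.differentiableOn
      hnonneg⟩
end
end
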